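/- Let a : ℝ → [0,1] satisfy (A1') and have √a κ-Lipschitz, and H ∈ 𝓗_sqc(α0,α1,γ,η) with γ > 2; set A := {a > 0} and λ0 := inf{μ : a u'' + H(x,u') = μ admits a continuous viscosity supersolution on ℝ}. Let x0 ∈ {a = 0} be an accumulation point of A, let λ > λ0, let f ∈ C¹(A) be a bounded solution of the ODE a(x)f' + H(x,f) = λ on A, and let u_{λ0} be a Lipschitz viscosity solution of a u'' + H(x,u') = λ0 on ℝ. Then: (a) if f ≥ u'_{λ0} on A, then lim_{x→x0, x∈A} f(x) = p⁺_λ(x0) > p⁺_{λ0}(x0) ≥ p̂(x0); (b) if f ≤ u'_{λ0} on A, then lim_{x→x0, x∈A} f(x) = p⁻_λ(x0) < p⁻_{λ0}(x0) ≤ p̂(x0). In particular λ̂(x0) ≤ λ0. -/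

import Mathlib

open Real Set Filter Topology MeasureTheory

noncomputable section

/-- The Hamiltonian class `𝓗(α₀, α₁, γ)`: growth condition (H1) and the local
Lipschitz conditions (H2), (H3). -/
def HamClass (a0 a1 g : ℝ) (H : ℝ → ℝ → ℝ) : Prop :=
  (∀ x p : ℝ, a0 * |p| ^ g - 1 / a0 ≤ H x p) ∧
  (∀ x p : ℝ, H x p ≤ a1 * (|p| ^ g + 1)) ∧
  (∀ x p q : ℝ, |H x p - H x q| ≤ a1 * (|p| + |q| + 1) ^ (g - 1) * |p - q|) ∧
  (∀ x y p : ℝ, |H x p - H y p| ≤ a1 * (|p| ^ g + 1) * |x - y|)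

/-- The strictly quasiconvex class `𝓗_sqc(α₀, α₁, γ, η)` with (unique) minimizer map
`phat`. -/
def HamSqc (a0 a1 g eta : ℝ) (H : ℝ → ℝ → ℝ) (phat : ℝ → ℝ) : Prop :=
  HamClass a0 a1 g H ∧
  (∀ x p : ℝ, H x (phat x) ≤ H x p) ∧
  (∀ x p : ℝ, (∀ q : ℝ, H x p ≤ H x q) → p = phat x) ∧
  (∀ x p1 p2 : ℝ, p1 < p2 → p2 ≤ phat x → eta * |p1 - p2| ≤ H x p1 - H x p2) ∧
  (∀ x p1 p2 : ℝ, phat x ≤ p1 → p1 < p2 → eta * |p1 - p2| ≤ H x p2 - H x p1)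

/-- A continuous `u` is a viscosity supersolution of `a(x) u'' + H(x, u') = lam` on `U`:
at every local minimum point `x0 ∈ U` of `u - φ`, with `φ` of class `C²`, one has
`a(x0) φ''(x0) + H(x0, φ'(x0)) ≤ lam`. -/
def ViscSuperOn (a : ℝ → ℝ) (H : ℝ → ℝ → ℝ) (lam : ℝ) (U : Set ℝ) (u : ℝ → ℝ) : Prop :=
  ∀ φ : ℝ → ℝ, ContDiff ℝ 2 φ → ∀ x0 ∈ U, IsLocalMin (fun x => u x - φ x) x0 →
    a x0 * deriv (deriv φ) x0 + H x0 (deriv φ x0) ≤ lam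

/-- Viscosity subsolution of `a(x) u'' + H(x, u') = lam` on `U`. -/
def ViscSubOn (a : ℝ → ℝ) (H : ℝ → ℝ → ℝ) (lam : ℝ) (U : Set ℝ) (u : ℝ → ℝ) : Prop :=
  ∀ φ : ℝ → ℝ, ContDiff ℝ 2 φ → ∀ x0 ∈ U, IsLocalMax (fun x => u x - φ x) x0 →
    lam ≤ a x0 * deriv (deriv φ) x0 + H x0 (deriv φ x0)

/-- Viscosity solution of `a(x) u'' + H(x, u') = lam` on `U`. -/
def ViscSolOn (a : ℝ → ℝ) (H : ℝ → ℝ → ℝ) (lam : ℝ) (U : Set ℝ) (u : ℝ → ℝ) : Prop :=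
  ViscSubOn a H lam U u ∧ ViscSuperOn a H lam U u

/-- The critical value `λ₀`: the infimum of the levels `lam` at which the stationary
equation `a u'' + H(x, u') = lam` admits a continuous viscosity supersolution on `ℝ`. -/
def CriticalValue (a : ℝ → ℝ) (H : ℝ → ℝ → ℝ) : ℝ :=
  sInf {lam : ℝ | ∃ u : ℝ → ℝ, Continuous u ∧ ViscSuperOn a H lam Set.univ u}

/-- Condition (A1'): `a ≢ 0` and every connected component of `A := {a > 0}` is bounded
(components of an open subset of `ℝ` are automatically open intervals). -/
def CondA1' (a : ℝ → ℝ) : Prop :=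
  (∃ x, a x ≠ 0) ∧
  ∀ x, 0 < a x → Bornology.IsBounded (connectedComponentIn {y : ℝ | 0 < a y} x)

/-!
Let `ρ` be half the distance to `{a = 0}`. Since `√a` is Lipschitz, `a = O(ρ²)` on the interval of
length `ρ` to the left of a point of `{a > 0}`, so the mean value theorem gives `a f' = O(ρ)`
somewhere on it: near `x₀`, the value `H(x₀, f)` returns close to `lam` on each of these intervals.
A level `q` with `H(x₀, q) ≠ lam` can be crossed by `f` in one direction only, so `f` cannot stay
away from the roots of `H(x₀, ·) = lam` and must converge to the upper root once it is bounded
below by some `Q` with `H(x₀, Q) < lam`. Such a bound comes from the supersolution: if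
`u' ≤ f ≤ Q` on one of these intervals with `Q` on the decreasing branch and `H(x₀, Q) > lam₀`, a
steep enough parabola touches `u` from below there with some slope `p ≤ Q`, and `a = O(ρ²)` absorbs
its second derivative `O(1/ρ)`, leaving `H(x₀, p) ≤ lam₀ + o(1) < H(x₀, Q) ≤ H(x₀, p)`. The case
`f ≤ u'` is the reflection `x ↦ -x`, `p ↦ -p` of this one.
-/

section

open Metric
open scoped NNReal

/-! ### One-variable calculus -/

theorem sub_le_mul_sub_of_deriv_le {u : ℝ → ℝ} {s t Q : ℝ}
    (hu : AbsolutelyContinuousOnInterval u s t) (hst : s ≤ t)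
    (hQ : ∀ y ∈ Icc s t, DifferentiableAt ℝ u y → deriv u y ≤ Q) : u t - u s ≤ Q * (t - s) := by
  have hae : ∀ᵐ y ∂volume.restrict (Icc s t), deriv u y ≤ Q := by
    rw [ae_restrict_iff' measurableSet_Icc]
    filter_upwards [hu.ae_differentiableAt] with y hdiff hy
    exact hQ y hy (hdiff (Icc_subset_uIcc hy))
  calc u t - u s = ∫ y in s..t, deriv u y := hu.integral_deriv_eq_sub.symm
    _ ≤ ∫ _ in s..t, Q := intervalIntegral.integral_mono_ae_restrict hst
        hu.intervalIntegrable_deriv intervalIntegrable_const hae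
    _ = Q * (t - s) := by rw [intervalIntegral.integral_const, smul_eq_mul, mul_comm]

theorem le_of_hasDerivAt_of_eventually_sub_le {φ : ℝ → ℝ} {φ' Q z : ℝ} (hφ : HasDerivAt φ φ' z)
    (hQ : ∀ᶠ y in 𝓝[>] z, φ y - φ z ≤ Q * (y - z)) : φ' ≤ Q := by
  refine le_of_tendsto
    ((hasDerivWithinAt_iff_tendsto_slope' self_notMem_Ioi).1 hφ.hasDerivWithinAt) ?_
  filter_upwards [hQ, self_mem_nhdsWithin] with y hy hzy
  rw [slope_def_field]
  exact (div_le_iff₀ (sub_pos.2 hzy)).2 hy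

theorem le_on_Icc_of_le_right_of_deriv_pos {g : ℝ → ℝ} {s t q : ℝ}
    (hg : ∀ y ∈ Icc s t, DifferentiableAt ℝ g y) (ht : g t ≤ q)
    (hq : ∀ y ∈ Icc s t, g y = q → 0 < deriv g y) : ∀ y ∈ Icc s t, g y ≤ q := by
  have neg_mem : ∀ y ∈ Icc (-t) (-s), -y ∈ Icc s t := fun y hy =>
    ⟨le_neg_of_le_neg hy.2, neg_le_of_neg_le hy.1⟩
  have hderiv : ∀ y ∈ Icc (-t) (-s), HasDerivAt (fun y => g (-y)) (-deriv g (-y)) y :=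
    fun y hy => ((hg (-y) (neg_mem y hy)).hasDerivAt.comp y (hasDerivAt_neg y)).congr_deriv
      (mul_neg_one _)
  have hle := image_le_of_deriv_right_lt_deriv_boundary' (B := fun _ => q) (B' := fun _ => 0)
    (fun y hy => (hderiv y hy).continuousAt.continuousWithinAt)
    (fun y hy => (hderiv y (Ico_subset_Icc_self hy)).hasDerivWithinAt)
    (by simpa using ht) continuousOn_const (fun y _ => hasDerivWithinAt_const _ _ _)
    (fun y hy hyq => neg_lt_zero.2 (hq (-y) (neg_mem y (Ico_subset_Icc_self hy)) hyq))
  intro y hy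
  simpa using hle (x := -y) ⟨neg_le_neg hy.2, neg_le_neg hy.1⟩

theorem exists_mul_deriv_le {a f : ℝ → ℝ} {s t B M : ℝ} (hst : s < t)
    (hf : ∀ y ∈ Icc s t, DifferentiableAt ℝ f y) (hM : ∀ y ∈ Icc s t, |f y| ≤ M)
    (ha0 : ∀ y ∈ Icc s t, 0 ≤ a y) (haB : ∀ y ∈ Icc s t, a y ≤ B) :
    ∃ y ∈ Icc s t, a y * deriv f y ≤ B * (2 * M / (t - s)) := by
  obtain ⟨y, hy, hslope⟩ := exists_deriv_eq_slope f hst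
    (fun y hy => (hf y hy).continuousAt.continuousWithinAt)
    (fun y hy => (hf y (Ioo_subset_Icc_self hy)).differentiableWithinAt)
  have hyI : y ∈ Icc s t := Ioo_subset_Icc_self hy
  have hft : |f t| ≤ M := hM t (right_mem_Icc.2 hst.le)
  have hfs : |f s| ≤ M := hM s (left_mem_Icc.2 hst.le)
  have hM0 : 0 ≤ M := (abs_nonneg _).trans hft
  have : 0 < t - s := sub_pos.2 hst
  have hderiv : deriv f y ≤ 2 * M / (t - s) := by
    rw [hslope]
    gcongr
    linarith [(abs_le.1 hft).2, (abs_le.1 hfs).1]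
  refine ⟨y, hyI, ?_⟩
  calc a y * deriv f y ≤ a y * (2 * M / (t - s)) := mul_le_mul_of_nonneg_left hderiv (ha0 y hyI)
    _ ≤ B * (2 * M / (t - s)) := mul_le_mul_of_nonneg_right (haB y hyI) (by positivity)

theorem eq_of_sublevel_eq_Icc {h : ℝ → ℝ} {m q c : ℝ} (hh : Continuous h) (hmq : m ≤ q)
    (heq : {p | h p ≤ c} = Icc m q) : h m = c ∧ h q = c := by
  have hfrontier : ({m, q} : Set ℝ) ⊆ {p | h p = c} := by
    rw [← frontier_Icc hmq, ← heq]
    exact frontier_le_subset_eq hh continuous_const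
  exact ⟨hfrontier (by simp), hfrontier (by simp)⟩

theorem eventually_forall_abs_apply_sub_lt {H : ℝ → ℝ → ℝ} (hH : Continuous ↿H) (x₀ M : ℝ) {ε : ℝ}
    (hε : 0 < ε) : ∀ᶠ x in 𝓝 x₀, ∀ p, |p| ≤ M → |H x p - H x₀ p| < ε := by
  have hnear : ∀ p ∈ Icc (-M) M, ∀ᶠ z : ℝ × ℝ in 𝓝 (x₀, p), |H z.1 z.2 - H x₀ z.2| < ε := by
    intro p _
    have hcont : Continuous fun z : ℝ × ℝ => |H z.1 z.2 - H x₀ z.2| :=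
      (hH.sub (hH.comp (continuous_const.prodMk continuous_snd))).abs
    exact hcont.continuousAt.eventually_lt continuousAt_const (by simpa using hε)
  simpa only [mem_Icc, ← abs_le] using
    isCompact_Icc.eventually_forall_of_forall_eventually
      (P := fun x p => |H x p - H x₀ p| < ε) hnear

/-! ### Degenerate diffusion coefficients -/

/-- Admissible diffusion coefficients: `a ≥ 0` with `√a` Lipschitz, so that `a` vanishes at least
quadratically at its zeros. -/
structure HasLipschitzSqrt (K : ℝ≥0) (a : ℝ → ℝ) : Prop where
  nonneg : ∀ x, 0 ≤ a x
  lipschitz : LipschitzWith K fun x => √(a x)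

/-- Half the distance from `x` to the zero set of `a`: the scale on which `a` stays positive around
`x`, yet is at most of the order of the square of that scale. -/
def degeneracyRadius (a : ℝ → ℝ) (x : ℝ) : ℝ :=
  infDist x {y | a y = 0} / 2

namespace HasLipschitzSqrt

variable {K : ℝ≥0} {a : ℝ → ℝ} {x₀ : ℝ}

theorem continuous (ha : HasLipschitzSqrt K a) : Continuous a :=
  (ha.lipschitz.continuous.pow 2).congr fun x => Real.sq_sqrt (ha.nonneg x)

theorem comp_neg (ha : HasLipschitzSqrt K a) : HasLipschitzSqrt K fun x => a (-x) where
  nonneg x := ha.nonneg (-x)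
  lipschitz := LipschitzWith.of_dist_le_mul fun x y => by
    simpa only [dist_neg_neg] using ha.lipschitz.dist_le_mul (-x) (-y)

theorem le_sq_mul_dist (ha : HasLipschitzSqrt K a) {z : ℝ} (hz : a z = 0) (y : ℝ) :
    a y ≤ (K * dist y z) ^ 2 := by
  have hsqrt : √(a y) ≤ K * dist y z := by
    simpa [hz, Real.dist_eq, abs_of_nonneg (Real.sqrt_nonneg _)] using
      ha.lipschitz.dist_le_mul y z
  calc a y = √(a y) ^ 2 := (Real.sq_sqrt (ha.nonneg y)).symm
    _ ≤ (K * dist y z) ^ 2 := by gcongr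

theorem degeneracyRadius_pos (ha : HasLipschitzSqrt K a) (hx₀ : a x₀ = 0) {x : ℝ} (hx : 0 < a x) :
    0 < degeneracyRadius a x :=
  half_pos <| ((isClosed_eq ha.continuous continuous_const).notMem_iff_infDist_pos
    (nonempty_of_mem hx₀)).1 hx.ne'

theorem pos_of_dist_le_degeneracyRadius (ha : HasLipschitzSqrt K a) (hx₀ : a x₀ = 0) {x y : ℝ}
    (hx : 0 < a x) (hy : dist y x ≤ degeneracyRadius a x) : 0 < a y := by
  refine (ha.nonneg y).lt_of_ne' fun hy0 => ?_
  have hle : infDist x {y | a y = 0} ≤ dist y x := dist_comm x y ▸ infDist_le_dist_of_mem hy0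
  have hpos := ha.degeneracyRadius_pos hx₀ hx
  rw [degeneracyRadius] at hy hpos
  linarith

theorem le_sq_mul_degeneracyRadius (ha : HasLipschitzSqrt K a) (hx₀ : a x₀ = 0) {x y : ℝ}
    (hy : dist y x ≤ degeneracyRadius a x) : a y ≤ (3 * K * degeneracyRadius a x) ^ 2 := by
  obtain ⟨z, hz, hxz⟩ := (isClosed_eq ha.continuous continuous_const).exists_infDist_eq_dist
    (nonempty_of_mem hx₀) x
  have hyz : dist y z ≤ 3 * degeneracyRadius a x := by
    have htri := dist_triangle y x z
    rw [degeneracyRadius] at hy ⊢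
    linarith
  calc a y ≤ (K * dist y z) ^ 2 := ha.le_sq_mul_dist hz y
    _ ≤ (K * (3 * degeneracyRadius a x)) ^ 2 := by gcongr
    _ = (3 * K * degeneracyRadius a x) ^ 2 := by ring

end HasLipschitzSqrt

theorem degeneracyRadius_le_dist {a : ℝ → ℝ} {x₀ : ℝ} (hx₀ : a x₀ = 0) (x : ℝ) :
    degeneracyRadius a x ≤ dist x x₀ := by
  have hle : infDist x {y | a y = 0} ≤ dist x x₀ := infDist_le_dist_of_mem hx₀
  have hnonneg : 0 ≤ infDist x {y | a y = 0} := infDist_nonneg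
  rw [degeneracyRadius]
  linarith

theorem tendsto_degeneracyRadius {a : ℝ → ℝ} {x₀ : ℝ} (hx₀ : a x₀ = 0) :
    Tendsto (degeneracyRadius a) (𝓝 x₀) (𝓝 0) := by
  have hlim := (continuous_infDist_pt {y | a y = 0}).div_const 2 |>.tendsto x₀
  rwa [infDist_zero_of_mem (show x₀ ∈ {y | a y = 0} from hx₀), zero_div] at hlim

theorem dist_le_degeneracyRadius_of_mem_Icc {a : ℝ → ℝ} {x y : ℝ}
    (hy : y ∈ Icc (x - degeneracyRadius a x) x) : dist y x ≤ degeneracyRadius a x := by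
  rw [Real.dist_eq, abs_sub_comm, abs_of_nonneg (sub_nonneg.2 hy.2)]
  linarith [hy.1]

theorem HasLipschitzSqrt.eventually_forall_mem_Icc {K : ℝ≥0} {a : ℝ → ℝ} {x₀ : ℝ} {P : ℝ → Prop}
    (ha : HasLipschitzSqrt K a) (hx₀ : a x₀ = 0) (hP : ∀ᶠ y in 𝓝[{x | 0 < a x}] x₀, P y) :
    ∀ᶠ x in 𝓝[{x | 0 < a x}] x₀, ∀ y ∈ Icc (x - degeneracyRadius a x) x, P y := by
  obtain ⟨δ, hδ, hball⟩ := mem_nhdsWithin_iff.1 hP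
  filter_upwards [mem_nhdsWithin_of_mem_nhds (ball_mem_nhds x₀ (half_pos hδ)),
    self_mem_nhdsWithin] with x hxδ hx y hy
  have hyx := dist_le_degeneracyRadius_of_mem_Icc hy
  have hyx₀ : dist y x₀ < δ := by
    linarith [dist_triangle y x x₀, degeneracyRadius_le_dist hx₀ x, mem_ball.1 hxδ]
  exact hball ⟨hyx₀, ha.pos_of_dist_le_degeneracyRadius hx₀ hx hyx⟩

/-! ### The asymptotically autonomous equation at a degenerate point -/

/-- Bounded solutions near `x₀` of the equation `a f' + h(f) = lam + o(1)`, obtained from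
`a f' + H(x, f) = lam` by freezing the Hamiltonian at `h = H(x₀, ·)`. Every condition is imposed
only on `{a > 0}` near `x₀`. -/
structure IsAsymptoticSolution (a h : ℝ → ℝ) (lam x₀ : ℝ) (f : ℝ → ℝ) : Prop where
  differentiableAt : ∀ᶠ x in 𝓝[{x | 0 < a x}] x₀, DifferentiableAt ℝ f x
  bounded : ∃ M, ∀ᶠ x in 𝓝[{x | 0 < a x}] x₀, |f x| ≤ M
  tendsto : Tendsto (fun x => a x * deriv f x + h (f x)) (𝓝[{x | 0 < a x}] x₀) (𝓝 lam)

namespace IsAsymptoticSolution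

variable {K : ℝ≥0} {a h f : ℝ → ℝ} {lam x₀ v q : ℝ}

theorem neg (hf : IsAsymptoticSolution a h lam x₀ f) :
    IsAsymptoticSolution a (fun p => -h (-p)) (-lam) x₀ (fun x => -f x) where
  differentiableAt := hf.differentiableAt.mono fun _ hx => hx.neg
  bounded := by simpa only [abs_neg] using hf.bounded
  tendsto := hf.tendsto.neg.congr fun x => by
    rw [deriv.fun_neg, neg_neg]
    ring

-- Since `a = O(ρ²)` on an interval of length `ρ`, the mean value theorem makes `a f' = O(ρ)` there.
theorem eventually_exists_lt (hf : IsAsymptoticSolution a h lam x₀ f) (ha : HasLipschitzSqrt K a)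
    (hx₀ : a x₀ = 0) (hv : v < lam) :
    ∀ᶠ x in 𝓝[{x | 0 < a x}] x₀, ∃ y ∈ Icc (x - degeneracyRadius a x) x, v < h (f y) := by
  obtain ⟨M, hM⟩ := hf.bounded
  have hsmall : Tendsto (fun x => 18 * K ^ 2 * M * degeneracyRadius a x)
      (𝓝[{x | 0 < a x}] x₀) (𝓝 0) := by
    simpa using ((tendsto_degeneracyRadius hx₀).mono_left nhdsWithin_le_nhds).const_mul
      (18 * K ^ 2 * M)
  have hode := hf.tendsto.eventually_const_lt (add_div_two_lt_right.2 hv)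
  filter_upwards [ha.eventually_forall_mem_Icc hx₀ hf.differentiableAt,
    ha.eventually_forall_mem_Icc hx₀ hM, ha.eventually_forall_mem_Icc hx₀ hode,
    hsmall.eventually_lt_const (half_pos (sub_pos.2 hv)), self_mem_nhdsWithin]
    with x hdiff hbdd hode hsmall hx
  have hρ : 0 < degeneracyRadius a x := ha.degeneracyRadius_pos hx₀ hx
  obtain ⟨y, hy, hay⟩ := exists_mul_deriv_le (sub_lt_self x hρ) hdiff hbdd
    (fun y _ => ha.nonneg y)
    (fun y hy => ha.le_sq_mul_degeneracyRadius hx₀ (dist_le_degeneracyRadius_of_mem_Icc hy))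
  have hrate : (3 * K * degeneracyRadius a x) ^ 2 * (2 * M / (x - (x - degeneracyRadius a x))) =
      18 * K ^ 2 * M * degeneracyRadius a x := by
    rw [sub_sub_cancel]
    field_simp
    ring
  exact ⟨y, hy, by linarith [hode y hy]⟩

theorem eventually_le_on_Icc (hf : IsAsymptoticSolution a h lam x₀ f) (ha : HasLipschitzSqrt K a)
    (hx₀ : a x₀ = 0) (hq : h q < lam) :
    ∀ᶠ x in 𝓝[{x | 0 < a x}] x₀,
      f x ≤ q → ∀ y ∈ Icc (x - degeneracyRadius a x) x, f y ≤ q := by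
  have hcross : ∀ᶠ y in 𝓝[{x | 0 < a x}] x₀, f y = q → 0 < deriv f y := by
    filter_upwards [hf.tendsto.eventually_const_lt hq, self_mem_nhdsWithin] with y hy hay hyq
    rw [hyq, lt_add_iff_pos_left] at hy
    exact (mul_pos_iff_of_pos_left hay).1 hy
  filter_upwards [ha.eventually_forall_mem_Icc hx₀ hf.differentiableAt,
    ha.eventually_forall_mem_Icc hx₀ hcross] with x hdiff hcross hx
  exact le_on_Icc_of_le_right_of_deriv_pos hdiff hx hcross

theorem eventually_gt (hf : IsAsymptoticSolution a h lam x₀ f) (ha : HasLipschitzSqrt K a)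
    (hx₀ : a x₀ = 0) (hq : h q < lam) (hv : v < lam)
    (hle : ∀ᶠ x in 𝓝[{x | 0 < a x}] x₀, f x ≤ q → h (f x) ≤ v) :
    ∀ᶠ x in 𝓝[{x | 0 < a x}] x₀, q < f x := by
  filter_upwards [hf.eventually_exists_lt ha hx₀ hv, hf.eventually_le_on_Icc ha hx₀ hq,
    ha.eventually_forall_mem_Icc hx₀ hle] with x ⟨y, hy, hvy⟩ hbarrier hle
  by_contra! hx
  exact hvy.not_ge (hle y hy (hbarrier hx y hy))

theorem eventually_lt (hf : IsAsymptoticSolution a h lam x₀ f) (ha : HasLipschitzSqrt K a)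
    (hx₀ : a x₀ = 0) (hq : lam < h q) (hv : lam < v)
    (hge : ∀ᶠ x in 𝓝[{x | 0 < a x}] x₀, q ≤ f x → v ≤ h (f x)) :
    ∀ᶠ x in 𝓝[{x | 0 < a x}] x₀, f x < q := by
  have hgt := hf.neg.eventually_gt (q := -q) (v := -v) ha hx₀ (by simpa using hq) (neg_lt_neg hv)
    (by simpa using hge)
  simpa using hgt

theorem tendsto_of_eventually_ge {phat P Q : ℝ} (hf : IsAsymptoticSolution a h lam x₀ f)
    (ha : HasLipschitzSqrt K a) (hx₀ : a x₀ = 0) (hanti : AntitoneOn h (Iic phat))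
    (hmono : StrictMonoOn h (Ici phat)) (hP : phat < P) (hPlam : h P = lam) (hQlam : h Q < lam)
    (hQ : ∀ᶠ x in 𝓝[{x | 0 < a x}] x₀, Q ≤ f x) :
    Tendsto f (𝓝[{x | 0 < a x}] x₀) (𝓝 P) := by
  refine tendsto_order.2 ⟨fun q hq => ?_, fun q hq => ?_⟩
  · have hlevel : h (max q phat) < lam :=
      hPlam ▸ hmono (mem_Ici.2 (le_max_right _ _)) (mem_Ici.2 hP.le) (max_lt hq hP)
    have hgt := hf.eventually_gt ha hx₀ hlevel (max_lt hQlam hlevel) <| hQ.mono fun x hQx hx => by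
      rcases le_total (f x) phat with hfx | hfx
      · exact le_max_of_le_left (hanti (hQx.trans hfx) hfx hQx)
      · exact le_max_of_le_right (hmono.monotoneOn hfx (mem_Ici.2 (le_max_right _ _)) hx)
    exact hgt.mono fun x hx => (le_max_left _ _).trans_lt hx
  · have hqphat : phat ≤ q := (hP.trans hq).le
    have hlevel : lam < h q := hPlam ▸ hmono (mem_Ici.2 hP.le) hqphat hq
    exact hf.eventually_lt ha hx₀ hlevel hlevel <| Eventually.of_forall fun x hx =>
      hmono.monotoneOn hqphat (hqphat.trans hx) hx

end IsAsymptoticSolution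

/-- Bounded solutions of `a f' + H(x, f) = lam` on `{a > 0}`; no condition is imposed where `a`
vanishes. -/
structure IsBoundedSolution (a : ℝ → ℝ) (H : ℝ → ℝ → ℝ) (lam : ℝ) (f : ℝ → ℝ) : Prop where
  differentiableAt : ∀ x, 0 < a x → DifferentiableAt ℝ f x
  bounded : ∃ M, ∀ x, 0 < a x → |f x| ≤ M
  ode : ∀ x, 0 < a x → a x * deriv f x + H x (f x) = lam

namespace IsBoundedSolution

variable {a f : ℝ → ℝ} {H : ℝ → ℝ → ℝ} {lam : ℝ}

theorem comp_neg (hf : IsBoundedSolution a H lam f) :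
    IsBoundedSolution (fun x => a (-x)) (fun x p => H (-x) (-p)) lam fun x => -f (-x) where
  differentiableAt x hx := ((hf.differentiableAt (-x) hx).comp x differentiableAt_id.neg).neg
  bounded := hf.bounded.imp fun M hM x hx => by simpa only [abs_neg] using hM (-x) hx
  ode x hx := by
    rw [deriv.fun_neg, deriv_comp_neg f x, neg_neg, neg_neg]
    exact hf.ode (-x) hx

theorem isAsymptoticSolution (hf : IsBoundedSolution a H lam f) (hH : Continuous ↿H) (x₀ : ℝ) :
    IsAsymptoticSolution a (H x₀) lam x₀ f where
  differentiableAt := eventually_mem_nhdsWithin.mono hf.differentiableAt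
  bounded := hf.bounded.imp fun _ hM => eventually_mem_nhdsWithin.mono hM
  tendsto := by
    obtain ⟨M, hM⟩ := hf.bounded
    refine Metric.tendsto_nhds.2 fun ε hε => ?_
    filter_upwards [mem_nhdsWithin_of_mem_nhds (eventually_forall_abs_apply_sub_lt hH x₀ M hε),
      self_mem_nhdsWithin] with x hHx hx
    rw [← hf.ode x hx, dist_add_left, dist_comm]
    exact hHx (f x) (hM x hx)

end IsBoundedSolution

/-! ### Lipschitz supersolutions near a degenerate point -/

theorem exists_mem_ball_isLocalMin_add_sq {u : ℝ → ℝ} {L : ℝ≥0} {m r k : ℝ}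
    (hu : LipschitzWith L u) (hr : 0 < r) (hk : L < k * r) :
    ∃ z ∈ ball m r, IsLocalMin (fun x => u x - -(k * (x - m) ^ 2)) z := by
  have hcont := hu.continuous
  obtain ⟨z, hz, hmin⟩ := (isCompact_closedBall m r).exists_isMinOn
    (nonempty_closedBall.2 hr.le) (f := fun x => u x - -(k * (x - m) ^ 2)) (by fun_prop)
  have hzball : z ∈ ball m r := by
    refine mem_ball.2 ((mem_closedBall.1 hz).lt_of_ne fun hzr => ?_)
    have hcenter : u z + k * r ^ 2 ≤ u m := by
      simpa [← sq_abs (z - m), ← Real.dist_eq, hzr] using hmin (mem_closedBall_self hr.le)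
    have hlip : u m - u z ≤ L * r := by
      rw [← hzr, dist_comm]
      exact (le_abs_self _).trans (hu.dist_le_mul m z)
    have hkr : L * r < k * r * r := mul_lt_mul_of_pos_right hk hr
    linarith
  exact ⟨z, hzball,
    hmin.isLocalMin (mem_of_superset (isOpen_ball.mem_nhds hzball) ball_subset_closedBall)⟩

theorem hasDerivAt_neg_mul_sub_sq (k m x : ℝ) :
    HasDerivAt (fun x => -(k * (x - m) ^ 2)) (-(2 * k * (x - m))) x :=
  ((((hasDerivAt_id x).sub_const m).pow 2).const_mul k).neg.congr_deriv (by simp; ring)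

theorem le_of_isLocalMin_sub_of_deriv_le {u φ : ℝ → ℝ} {L : ℝ≥0} {φ' z Q : ℝ}
    (hu : LipschitzWith L u) (hφ : HasDerivAt φ φ' z) (hmin : IsLocalMin (fun x => u x - φ x) z)
    (hQ : ∀ᶠ y in 𝓝 z, DifferentiableAt ℝ u y → deriv u y ≤ Q) : φ' ≤ Q := by
  obtain ⟨δ, hδ, hball⟩ := Metric.eventually_nhds_iff_ball.1 hQ
  refine le_of_hasDerivAt_of_eventually_sub_le hφ ?_
  filter_upwards [hmin.filter_mono nhdsWithin_le_nhds, self_mem_nhdsWithin,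
    mem_nhdsWithin_of_mem_nhds (ball_mem_nhds z hδ)] with y hy hzy hyδ
  have hslope := sub_le_mul_sub_of_deriv_le
    hu.lipschitzOnWith.absolutelyContinuousOnInterval (le_of_lt hzy) fun w hw =>
      hball w ((convex_ball z δ).ordConnected.out (mem_ball_self hδ) hyδ hw)
  linarith

namespace ViscSuperOn

variable {a u : ℝ → ℝ} {H : ℝ → ℝ → ℝ} {lam x₀ : ℝ} {K L : ℝ≥0}

theorem comp_neg (hu : ViscSuperOn a H lam univ u) :
    ViscSuperOn (fun x => a (-x)) (fun x p => H (-x) (-p)) lam univ fun x => u (-x) := by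
  intro φ hφ x _ hmin
  have hderiv : deriv (fun y => φ (-y)) = fun y => -deriv φ (-y) := funext (deriv_comp_neg φ)
  have hderiv2 : deriv (deriv fun y => φ (-y)) (-x) = deriv (deriv φ) x := by
    rw [hderiv, deriv.fun_neg, deriv_comp_neg (deriv φ), neg_neg, neg_neg]
  have hmin_neg : IsLocalMin (fun y => u y - φ (-y)) (-x) := by
    have hcomp := IsLocalMin.comp_continuous (f := fun y => u (-y) - φ y) (g := Neg.neg)
      (b := -x) (by rwa [neg_neg]) continuous_neg.continuousAt
    simpa [Function.comp_def] using hcomp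
  have hvisc := hu (fun y => φ (-y)) (hφ.comp contDiff_neg) (-x) (mem_univ _) hmin_neg
  rw [hderiv2, hderiv] at hvisc
  simpa only [neg_neg] using hvisc

theorem exists_slope_mem_ball {m r : ℝ} (hsup : ViscSuperOn a H lam (ball m r) u)
    (hu : LipschitzWith L u) (hr : 0 < r) :
    ∃ z ∈ ball m r, ∃ p : ℝ, |p| ≤ 2 * (L + 1) ∧ H z p ≤ lam + 2 * (L + 1) / r * a z ∧
      ∀ Q, (∀ y ∈ ball m r, DifferentiableAt ℝ u y → deriv u y ≤ Q) → p ≤ Q := by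
  obtain ⟨k, hkr⟩ : ∃ k : ℝ, k * r = L + 1 := ⟨(L + 1) / r, div_mul_cancel₀ _ hr.ne'⟩
  have hk : 0 < k := pos_of_mul_pos_left (hkr ▸ by positivity) hr.le
  obtain ⟨z, hz, hmin⟩ := exists_mem_ball_isLocalMin_add_sq (m := m) hu hr (hkr ▸ lt_add_one _)
  have hderiv : deriv (fun x => -(k * (x - m) ^ 2)) = fun x => -(2 * k * (x - m)) :=
    funext fun x => (hasDerivAt_neg_mul_sub_sq k m x).deriv
  have hderiv2 : deriv (fun x => -(2 * k * (x - m))) z = -(2 * k) := by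
    simp [deriv.fun_neg]
  have hvisc := hsup (fun x => -(k * (x - m) ^ 2)) (by fun_prop) z hz hmin
  rw [hderiv, hderiv2] at hvisc
  refine ⟨z, hz, -(2 * k * (z - m)), ?_, ?_, fun Q hQ => ?_⟩
  · calc |-(2 * k * (z - m))| = 2 * k * dist z m := by
          rw [abs_neg, abs_mul, abs_of_pos (by positivity), Real.dist_eq]
      _ ≤ 2 * k * r := by gcongr; exact (mem_ball.1 hz).le
      _ = 2 * (L + 1) := by rw [mul_assoc, hkr]
  · have hrate : 2 * ((L : ℝ) + 1) / r = 2 * k := by rw [← hkr]; field_simp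
    rw [hrate]
    linarith
  · exact le_of_isLocalMin_sub_of_deriv_le hu (hasDerivAt_neg_mul_sub_sq k m z) hmin
      (eventually_of_mem (isOpen_ball.mem_nhds hz) hQ)

theorem exists_slope_lt (hsup : ViscSuperOn a H lam univ u) (hu : LipschitzWith L u)
    (hH : Continuous ↿H) (x₀ C : ℝ) {c : ℝ} (hc : lam < c) :
    ∃ δ > 0, ∀ m r, 0 < r → dist m x₀ + r < δ →
      (∀ y ∈ ball m r, a y ≤ (C * r) ^ 2) →
      ∃ p, H x₀ p < c ∧ ∀ Q, (∀ y ∈ ball m r, DifferentiableAt ℝ u y → deriv u y ≤ Q) → p ≤ Q := by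
  have hsmall : ∀ᶠ r in 𝓝 (0 : ℝ), 2 * (L + 1) * C ^ 2 * r < (c - lam) / 2 := by
    have hcont : Continuous fun r : ℝ => 2 * (L + 1) * C ^ 2 * r := by fun_prop
    exact hcont.continuousAt.eventually_lt continuousAt_const (by simpa using hc)
  obtain ⟨δ₁, hδ₁, hHδ⟩ := Metric.eventually_nhds_iff_ball.1
    (eventually_forall_abs_apply_sub_lt hH x₀ (2 * (L + 1)) (half_pos (sub_pos.2 hc)))
  obtain ⟨δ₂, hδ₂, hrδ⟩ := Metric.eventually_nhds_iff_ball.1 hsmall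
  refine ⟨min δ₁ δ₂, lt_min hδ₁ hδ₂, fun m r hr hδ haC => ?_⟩
  obtain ⟨z, hz, p, hp, hHz, hpQ⟩ := exists_slope_mem_ball
    (fun φ hφ x _ => hsup φ hφ x (mem_univ x)) hu hr (m := m)
  refine ⟨p, ?_, hpQ⟩
  have hz₁ : z ∈ ball x₀ δ₁ := mem_ball.2 <| by
    linarith [dist_triangle z m x₀, mem_ball.1 hz, min_le_left δ₁ δ₂]
  have hr₂ : r ∈ ball 0 δ₂ := by
    rw [mem_ball_zero_iff, Real.norm_of_nonneg hr.le]
    linarith [dist_nonneg (x := m) (y := x₀), min_le_right δ₁ δ₂]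
  have hdiffusion : 2 * (L + 1) / r * a z ≤ 2 * (L + 1) * C ^ 2 * r := by
    calc 2 * (L + 1) / r * a z ≤ 2 * (L + 1) / r * (C * r) ^ 2 := by gcongr; exact haC z hz
      _ = 2 * (L + 1) * C ^ 2 * r := by field_simp
  linarith [hrδ r hr₂, (abs_lt.1 (hHδ z hz₁ p hp)).1]

theorem le_of_forall_le (hsup : ViscSuperOn a H lam univ u) (hu : LipschitzWith L u)
    (hH : Continuous ↿H) (ha : HasLipschitzSqrt K a) (hx₀ : a x₀ = 0) {c : ℝ}
    (hc : ∀ p, c ≤ H x₀ p) : c ≤ lam := by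
  by_contra! hlt
  obtain ⟨δ, hδ, hslope⟩ := hsup.exists_slope_lt hu hH x₀ K hlt
  obtain ⟨p, hp, -⟩ := hslope x₀ (δ / 2) (half_pos hδ) (by simpa using half_lt_self hδ)
    fun y hy => (ha.le_sq_mul_dist hx₀ y).trans (by gcongr; exact (mem_ball.1 hy).le)
  exact hp.not_ge (hc p)

end ViscSuperOn

/-! ### Boundary limits -/

theorem Icc_sub_eq_closedBall_half (x ρ : ℝ) :
    Icc (x - ρ) x = closedBall (x - ρ / 2) (ρ / 2) := by
  rw [Real.closedBall_eq_Icc]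
  ring_nf

section

variable {a f u : ℝ → ℝ} {H : ℝ → ℝ → ℝ} {K L : ℝ≥0} {lam₀ lam x₀ phat m P : ℝ}

-- If `f x ≤ Q`, then `u' ≤ f ≤ Q` on a whole interval to the left of `x`, and `u` has a slope
-- `p ≤ Q` there with `H x₀ p` close to `lam₀`, whereas `H x₀ p ≥ H x₀ Q > lam₀`.
theorem IsAsymptoticSolution.eventually_gt_of_deriv_le {Q : ℝ}
    (hf : IsAsymptoticSolution a (H x₀) lam x₀ f) (ha : HasLipschitzSqrt K a) (hx₀ : a x₀ = 0)
    (hH : Continuous ↿H) (hsup : ViscSuperOn a H lam₀ univ u) (hu : LipschitzWith L u)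
    (hfu : ∀ᶠ x in 𝓝[{x | 0 < a x}] x₀, DifferentiableAt ℝ u x → deriv u x ≤ f x)
    (hQlam₀ : lam₀ < H x₀ Q) (hQlam : H x₀ Q < lam) (hQ : ∀ p ≤ Q, H x₀ Q ≤ H x₀ p) :
    ∀ᶠ x in 𝓝[{x | 0 < a x}] x₀, Q < f x := by
  obtain ⟨δ, hδ, hslope⟩ := hsup.exists_slope_lt hu hH x₀ (6 * K) hQlam₀
  filter_upwards [hf.eventually_le_on_Icc ha hx₀ hQlam, ha.eventually_forall_mem_Icc hx₀ hfu,
    mem_nhdsWithin_of_mem_nhds (ball_mem_nhds x₀ (half_pos hδ)), self_mem_nhdsWithin]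
    with x hbarrier hfu hxδ hx
  by_contra! hfx
  set ρ := degeneracyRadius a x
  have hρ : 0 < ρ := ha.degeneracyRadius_pos hx₀ hx
  have hball : ball (x - ρ / 2) (ρ / 2) ⊆ Icc (x - ρ) x :=
    (Icc_sub_eq_closedBall_half x ρ).symm ▸ ball_subset_closedBall
  have hdist : dist (x - ρ / 2) x₀ + ρ / 2 < δ := by
    have hcenter : dist (x - ρ / 2) x = ρ / 2 := by
      rw [Real.dist_eq, sub_sub_cancel_left, abs_neg, abs_of_pos (half_pos hρ)]
    linarith [dist_triangle (x - ρ / 2) x x₀, degeneracyRadius_le_dist hx₀ x, mem_ball.1 hxδ]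
  have hdiffusion : ∀ y ∈ ball (x - ρ / 2) (ρ / 2), a y ≤ (6 * K * (ρ / 2)) ^ 2 := fun y hy =>
    (ha.le_sq_mul_degeneracyRadius hx₀ (dist_le_degeneracyRadius_of_mem_Icc (hball hy))).trans_eq
      (by ring)
  obtain ⟨p, hp, hpQ⟩ := hslope _ _ (half_pos hρ) hdist hdiffusion
  have hpQ : p ≤ Q := hpQ Q fun y hy hdiff =>
    (hfu y (hball hy) hdiff).trans (hbarrier hfx y (hball hy))
  exact hp.not_ge (hQ p hpQ)

theorem IsBoundedSolution.tendsto_of_deriv_le (hf : IsBoundedSolution a H lam f)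
    (ha : HasLipschitzSqrt K a) (hx₀ : a x₀ = 0) (hH : Continuous ↿H)
    (hanti : AntitoneOn (H x₀) (Iic phat)) (hmono : StrictMonoOn (H x₀) (Ici phat))
    (hphat : H x₀ phat ≤ lam₀) (hlam : lam₀ < lam) (hm : m ≤ phat) (hmlam : H x₀ m = lam)
    (hP : phat ≤ P) (hPlam : H x₀ P = lam) (hsup : ViscSuperOn a H lam₀ univ u)
    (hu : LipschitzWith L u) (hfu : ∀ x, 0 < a x → DifferentiableAt ℝ u x → deriv u x ≤ f x) :
    Tendsto f (𝓝[{x | 0 < a x}] x₀) (𝓝 P) := by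
  have hcont : Continuous (H x₀) := hH.comp (continuous_const.prodMk continuous_id)
  have hphatP : phat < P := hP.lt_of_ne (by rintro rfl; linarith)
  obtain ⟨Q, hQ, hQmid⟩ : ∃ Q ∈ Icc m phat, H x₀ Q = (lam₀ + lam) / 2 :=
    intermediate_value_Icc' hm hcont.continuousOn ⟨by linarith, by linarith⟩
  have hQlam : H x₀ Q < lam := hQmid ▸ add_div_two_lt_right.2 hlam
  have hfasymp := hf.isAsymptoticSolution hH x₀
  have hfQ := hfasymp.eventually_gt_of_deriv_le ha hx₀ hH hsup hu
    (eventually_mem_nhdsWithin.mono hfu) (hQmid ▸ left_lt_add_div_two.2 hlam) hQlam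
    fun p hp => hanti (hp.trans hQ.2) hQ.2 hp
  exact hfasymp.tendsto_of_eventually_ge ha hx₀ hanti hmono hphatP hPlam hQlam
    (hfQ.mono fun _ => le_of_lt)

theorem IsBoundedSolution.tendsto_of_le_deriv (hf : IsBoundedSolution a H lam f)
    (ha : HasLipschitzSqrt K a) (hx₀ : a x₀ = 0) (hH : Continuous ↿H)
    (hanti : StrictAntiOn (H x₀) (Iic phat)) (hmono : MonotoneOn (H x₀) (Ici phat))
    (hphat : H x₀ phat ≤ lam₀) (hlam : lam₀ < lam) (hm : m ≤ phat) (hmlam : H x₀ m = lam)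
    (hP : phat ≤ P) (hPlam : H x₀ P = lam) (hsup : ViscSuperOn a H lam₀ univ u)
    (hu : LipschitzWith L u) (hfu : ∀ x, 0 < a x → DifferentiableAt ℝ u x → f x ≤ deriv u x) :
    Tendsto f (𝓝[{x | 0 < a x}] x₀) (𝓝 m) := by
  have hlim : Tendsto (fun x => -f (-x)) (𝓝[{x | 0 < a (-x)}] (-x₀)) (𝓝 (-m)) := by
    refine hf.comp_neg.tendsto_of_deriv_le (phat := -phat) (m := -P) (L := L)
      (u := fun x => u (-x)) ha.comp_neg (by simpa using hx₀)
      (hH.comp (continuous_fst.neg.prodMk continuous_snd.neg)) ?_ ?_ (by simpa using hphat) hlam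
      (neg_le_neg hP) (by simpa using hPlam) (neg_le_neg hm) (by simpa using hmlam)
      hsup.comp_neg (LipschitzWith.of_dist_le_mul fun x y => ?_) fun x hx hdiff => ?_
    · intro p hp q hq hpq
      simpa using hmono (le_neg_of_le_neg (mem_Iic.1 hq)) (le_neg_of_le_neg (mem_Iic.1 hp))
        (neg_le_neg hpq)
    · intro p hp q hq hpq
      simpa using hanti (neg_le_of_neg_le (mem_Ici.1 hq)) (neg_le_of_neg_le (mem_Ici.1 hp))
        (neg_lt_neg hpq)
    · simpa only [dist_neg_neg] using hu.dist_le_mul (-x) (-y)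
    · rw [deriv_comp_neg u x]
      exact neg_le_neg (hfu (-x) hx (differentiableAt_comp_neg.1 hdiff))
  have hneg : Tendsto (fun x : ℝ => -x) (𝓝[{x | 0 < a x}] x₀) (𝓝[{x | 0 < a (-x)}] (-x₀)) :=
    continuous_neg.continuousWithinAt.tendsto_nhdsWithin fun x hx => by simpa using hx
  simpa [Function.comp_def] using (hlim.comp hneg).neg

theorem statement_11_general {pm pp : ℝ → ℝ} (ha : HasLipschitzSqrt K a) (hH : Continuous ↿H)
    (hx₀ : a x₀ = 0) (hanti : StrictAntiOn (H x₀) (Iic phat))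
    (hmono : StrictMonoOn (H x₀) (Ici phat))
    (hp : ∀ c, H x₀ phat ≤ c → {p | H x₀ p ≤ c} = Icc (pm c) (pp c)) (hlam : lam₀ < lam)
    (hf : IsBoundedSolution a H lam f) (hu : LipschitzWith L u)
    (hsup : ViscSuperOn a H lam₀ univ u) :
    H x₀ phat ≤ lam₀ ∧
    ((∀ x, 0 < a x → DifferentiableAt ℝ u x → deriv u x ≤ f x) →
      Tendsto f (𝓝[{x | 0 < a x}] x₀) (𝓝 (pp lam)) ∧ pp lam₀ < pp lam ∧ phat ≤ pp lam₀) ∧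
    ((∀ x, 0 < a x → DifferentiableAt ℝ u x → f x ≤ deriv u x) →
      Tendsto f (𝓝[{x | 0 < a x}] x₀) (𝓝 (pm lam)) ∧ pm lam < pm lam₀ ∧ pm lam₀ ≤ phat) := by
  have hcont : Continuous (H x₀) := hH.comp (continuous_const.prodMk continuous_id)
  have hphat₀ : H x₀ phat ≤ lam₀ := hsup.le_of_forall_le hu hH ha hx₀ fun p =>
    (le_total p phat).elim (fun h => hanti.antitoneOn h self_mem_Iic h)
      (fun h => hmono.monotoneOn self_mem_Ici h h)
  have hmem : ∀ c, lam₀ ≤ c → phat ∈ Icc (pm c) (pp c) := fun c hc =>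
    hp c (hphat₀.trans hc) ▸ hphat₀.trans hc
  have hlevel : ∀ c, lam₀ ≤ c → H x₀ (pm c) = c ∧ H x₀ (pp c) = c := fun c hc =>
    eq_of_sublevel_eq_Icc hcont ((hmem c hc).1.trans (hmem c hc).2) (hp c (hphat₀.trans hc))
  obtain ⟨hm₀, hP₀⟩ := hmem lam₀ le_rfl
  obtain ⟨hm, hP⟩ := hmem lam hlam.le
  obtain ⟨hHm₀, hHP₀⟩ := hlevel lam₀ le_rfl
  obtain ⟨hHm, hHP⟩ := hlevel lam hlam.le
  refine ⟨hphat₀, fun hfu => ⟨?_, ?_, hP₀⟩, fun hfu => ⟨?_, ?_, hm₀⟩⟩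
  · exact hf.tendsto_of_deriv_le ha hx₀ hH hanti.antitoneOn hmono hphat₀ hlam hm hHm hP hHP hsup
      hu hfu
  · exact (hmono.lt_iff_lt hP₀ hP).1 (hHP₀.trans_lt (hlam.trans_eq hHP.symm))
  · exact hf.tendsto_of_le_deriv ha hx₀ hH hanti hmono.monotoneOn hphat₀ hlam hm hHm hP hHP hsup
      hu hfu
  · exact (hanti.lt_iff_gt hm₀ hm).1 (hHm₀.trans_lt (hlam.trans_eq hHm.symm))

end

/-! ### The Hamiltonian classes -/

theorem HamClass.continuous {α₀ α₁ γ : ℝ} {H : ℝ → ℝ → ℝ} (hH : HamClass α₀ α₁ γ H)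
    (hγ : 1 ≤ γ) : Continuous ↿H := by
  obtain ⟨-, -, hH2, hH3⟩ := hH
  refine continuous_iff_continuousAt.2 fun ⟨y, q⟩ => tendsto_iff_dist_tendsto_zero.2 ?_
  have hmodulus : Continuous fun z : ℝ × ℝ =>
      α₁ * (|z.2| ^ γ + 1) * |z.1 - y| + α₁ * (|z.2| + |q| + 1) ^ (γ - 1) * |z.2 - q| := by
    have hpow : Continuous fun z : ℝ × ℝ => |z.2| ^ γ :=
      Continuous.rpow_const (by fun_prop) fun _ => Or.inr (by linarith)
    have hpow' : Continuous fun z : ℝ × ℝ => (|z.2| + |q| + 1) ^ (γ - 1) :=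
      Continuous.rpow_const (by fun_prop) fun _ => Or.inr (by linarith)
    fun_prop
  refine squeeze_zero (fun _ => dist_nonneg) (fun ⟨x, p⟩ => ?_)
    (by simpa using hmodulus.tendsto (y, q))
  exact (dist_triangle (H x p) (H y p) (H y q)).trans (add_le_add (hH3 x y p) (hH2 y p q))

namespace HamSqc

variable {α₀ α₁ γ η : ℝ} {H : ℝ → ℝ → ℝ} {phat : ℝ → ℝ}

theorem strictAntiOn (hH : HamSqc α₀ α₁ γ η H phat) (hη : 0 < η) (x : ℝ) :
    StrictAntiOn (H x) (Iic (phat x)) := fun p _ q hq hpq =>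
  sub_pos.1 ((mul_pos hη (abs_pos.2 (sub_ne_zero.2 hpq.ne))).trans_le (hH.2.2.2.1 x p q hpq hq))

theorem strictMonoOn (hH : HamSqc α₀ α₁ γ η H phat) (hη : 0 < η) (x : ℝ) :
    StrictMonoOn (H x) (Ici (phat x)) := fun p hp q _ hpq =>
  sub_pos.1 ((mul_pos hη (abs_pos.2 (sub_ne_zero.2 hpq.ne))).trans_le (hH.2.2.2.2 x p q hp hpq))

end HamSqc

end

/-- Theorem `appC teo boundary regularity2`: let `x0 ∈ {a = 0}` be an
accumulation point of `A := {a > 0}`, `lam > λ₀`, `f` a bounded `C¹` solution of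
`a f' + H(x,f) = lam` on `A`, and `u_{λ₀}` a Lipschitz viscosity solution at the critical
level.  If `f ≥ u'_{λ₀}` on `A` then `f → p⁺_lam(x0) > p⁺_{λ₀}(x0) ≥ p̂(x0)` at `x0`;
if `f ≤ u'_{λ₀}` on `A` then `f → p⁻_lam(x0) < p⁻_{λ₀}(x0) ≤ p̂(x0)`.
In particular `λ̂(x0) ≤ λ₀`. -/
theorem statement_11
    (a : ℝ → ℝ) (H : ℝ → ℝ → ℝ) (phat : ℝ → ℝ) (pm pp : ℝ → ℝ → ℝ)
    (κ α0 α1 γ η : ℝ)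
    (harange : ∀ x, a x ∈ Set.Icc (0:ℝ) 1)
    (hκ : 0 < κ) (hA2 : ∀ x y : ℝ, |Real.sqrt (a x) - Real.sqrt (a y)| ≤ κ * |x - y|)
    (hA1' : CondA1' a)
    (hα0 : 0 < α0) (hα1 : 0 < α1) (hγ : 2 < γ) (hη : 0 < η)
    (hH : HamSqc α0 α1 γ η H phat)
    (hp : ∀ lam x : ℝ, H x (phat x) ≤ lam →
      {p : ℝ | H x p ≤ lam} = Set.Icc (pm lam x) (pp lam x))
    (lam0 : ℝ) (hlam0 : lam0 = CriticalValue a H)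
    (x0 : ℝ) (hax0 : a x0 = 0) (hacc : x0 ∈ closure {x : ℝ | 0 < a x})
    (lam : ℝ) (hlam : lam0 < lam)
    (f : ℝ → ℝ)
    (hf1 : ContDiffOn ℝ 1 f {x : ℝ | 0 < a x})
    (hfbdd : ∃ M : ℝ, ∀ x : ℝ, 0 < a x → |f x| ≤ M)
    (hode : ∀ x : ℝ, 0 < a x → a x * deriv f x + H x (f x) = lam)
    (ulam0 : ℝ → ℝ)
    (hulip : ∃ L : NNReal, LipschitzWith L ulam0)
    (husol : ViscSolOn a H lam0 Set.univ ulam0) :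
    H x0 (phat x0) ≤ lam0 ∧
    ((∀ x : ℝ, 0 < a x → deriv ulam0 x ≤ f x) →
      Tendsto f (𝓝[{x : ℝ | 0 < a x}] x0) (𝓝 (pp lam x0)) ∧
      pp lam0 x0 < pp lam x0 ∧ phat x0 ≤ pp lam0 x0) ∧
    ((∀ x : ℝ, 0 < a x → f x ≤ deriv ulam0 x) →
      Tendsto f (𝓝[{x : ℝ | 0 < a x}] x0) (𝓝 (pm lam x0)) ∧
      pm lam x0 < pm lam0 x0 ∧ pm lam0 x0 ≤ phat x0) := by
  obtain ⟨L, hu⟩ := hulip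
  have ha : HasLipschitzSqrt κ.toNNReal a :=
    ⟨fun x => (harange x).1, LipschitzWith.of_dist_le_mul fun x y => by
      simpa only [Real.dist_eq, Real.coe_toNNReal κ hκ.le] using hA2 x y⟩
  have hf : IsBoundedSolution a H lam f :=
    ⟨fun x hx => (hf1.differentiableOn one_ne_zero).differentiableAt
      ((isOpen_lt continuous_const ha.continuous).mem_nhds hx), hfbdd, hode⟩
  obtain ⟨hphat, hpp, hpm⟩ := statement_11_general (pm := (pm · x0)) (pp := (pp · x0)) ha
    (hH.1.continuous (by linarith)) hax0 (hH.strictAntiOn hη x0) (hH.strictMonoOn hη x0)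
    (fun c hc => hp c x0 hc) hlam hf hu husol.2
  exact ⟨hphat, fun hfu => hpp fun x hx _ => hfu x hx, fun hfu => hpm fun x hx _ => hfu x hx⟩
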